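/- (Main Lemma for Strassen-like decoding graphs.) Let D be a fixed connected graph with two disjoint distinguished vertex subsets: m input vertices and t output vertices, where 2 ≤ t < m, and with maximum degree bounded by a constant. Define Dec_1D = D and, for k ≥ 1, let Dec_{k+1}D be obtained from m^k disjoint copies of D and t disjoint copies of Dec_kD by identifying, for each i ∈ [m^k] and j ∈ [t], the j-th output vertex of the i-th copy of D with the i-th input vertex of the j-th copy of Dec_kD; add loops to make Dec_kD d-regular for a suitable constant d and regard edges as undirected. Then there exists a constant c > 0, depending only on D, such that for every k ≥ 1, h(Dec_kD) ≥ c·(t/m)^k. -/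

import Mathlib

/-!
Write `ρ(i,a)` for the fraction of the tree-node set `node i a` lying in `S`, and `r = ρ(k,0)` for
the root. A copy of `D` that is not mixed lies entirely inside or outside `S`; since every copy
below the node `(i+1,b)` has `m` vertices in `node (i+1) b` and exactly one in each child set, the
mixed copies below `(i+1,b)` number at least `m^i · |ρ(i,t*b+j) - ρ(i+1,b)|` (`node_step`).
Telescoping along the tree, and using `t^i ≤ m^i`, gives for every level `i`
`t^i · ∑_a |ρ(i,a) - r| ≤ t · M`, where `M` is the number of mixed copies (`dev_le`).

At level `0` the sets are singletons, so `ρ(0,a) ∈ {0,1}` and hence `t^k · min r (1-r) ≤ t · M`.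
Summed over all levels, the bound also says that `|S|` differs from `r·|V|` by at most `t·M·Q`,
where `|V| = t^k·Q`, `Q = ∑_{i ≤ k} (m/t)^i`. As `|S| ≤ |V|/2`, these two facts give
`|S| ≤ 2·Q·t·M` (`card_le`). Finally `Q = O((m/t)^k)`, and by connectivity of `D` every mixed copy
contributes its own edge to the boundary of `S` (`mixed_le`).
-/

open scoped Classical

/-- A finite undirected multigraph, given by its edge-endpoint incidence map.
A loop is an edge whose two endpoints coincide; it contributes 1 to the degree
of its vertex. -/
structure Multigraph where
  V : Type
  E : Type
  [fintypeV : Fintype V]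
  [fintypeE : Fintype E]
  ends : E → Sym2 V

attribute [instance] Multigraph.fintypeV Multigraph.fintypeE

namespace Multigraph

/-- The degree of a vertex: the number of edges containing it (a loop counts once). -/
noncomputable def degree (G : Multigraph) (v : G.V) : ℕ :=
  (Finset.univ.filter fun e => v ∈ G.ends e).card

/-- `G` is `d`-regular. -/
def IsRegular (G : Multigraph) (d : ℕ) : Prop := ∀ v, G.degree v = d

/-- `E_G(A,B)`: the set of edges with one endpoint in `A` and the other in `B`. -/
noncomputable def between (G : Multigraph) (A B : Finset G.V) : Finset G.E :=
  Finset.univ.filter fun e => ∃ a ∈ A, ∃ b ∈ B, G.ends e = s(a, b)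

/-- `E_G(S, V ∖ S)`. -/
noncomputable def edgeBoundary (G : Multigraph) (S : Finset G.V) : Finset G.E :=
  G.between S Sᶜ

/-- The edge expansion `h(G)` of a `d`-regular multigraph:
`min_{U ⊆ V, |U| ≤ |V|/2} |E(U, V∖U)| / (d·|U|)`. -/
noncomputable def expansion (G : Multigraph) (d : ℕ) : ℝ :=
  sInf {x : ℝ | ∃ U : Finset G.V, U.Nonempty ∧ 2 * U.card ≤ Fintype.card G.V ∧
    x = ((G.edgeBoundary U).card : ℝ) / ((d : ℝ) * (U.card : ℝ))}

/-- The edge expansion `h_s(G)` restricted to sets of size at most `s`. -/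
noncomputable def expansionAtMost (G : Multigraph) (d : ℕ) (s : ℝ) : ℝ :=
  sInf {x : ℝ | ∃ U : Finset G.V, U.Nonempty ∧ (U.card : ℝ) ≤ s ∧
    x = ((G.edgeBoundary U).card : ℝ) / ((d : ℝ) * (U.card : ℝ))}

end Multigraph

/-- The base (decoding) graph `Dec_1` of a Strassen-like algorithm:
`m` input vertices (`Fin m`, the upper side) and `t` output vertices
(`Fin t`, the lower side), disjoint from the inputs; every edge is directed
from an input to an output. -/
structure BaseGraph (m t : ℕ) where
  E : Type
  [fintypeE : Fintype E]
  src : E → Fin m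
  dst : E → Fin t

attribute [instance] BaseGraph.fintypeE

/-- Connectivity of the base graph (on vertex set `Fin m ⊕ Fin t`). -/
def BaseGraph.Connected {m t : ℕ} (D : BaseGraph m t) : Prop :=
  (SimpleGraph.fromRel fun u v : Fin m ⊕ Fin t =>
    ∃ e, u = Sum.inl (D.src e) ∧ v = Sum.inr (D.dst e)).Connected

/-- In-degree (within the base graph) of the `j`-th output vertex. -/
noncomputable def BaseGraph.inDeg {m t : ℕ} (D : BaseGraph m t) (j : Fin t) : ℕ :=
  (Finset.univ.filter fun e => D.dst e = j).card

/-- Out-degree (within the base graph) of the `q`-th input vertex. -/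
noncomputable def BaseGraph.outDeg {m t : ℕ} (D : BaseGraph m t) (q : Fin m) : ℕ :=
  (Finset.univ.filter fun e => D.src e = q).card

/-- `DecStructure D k G` records that the multigraph `G` is (a loop-augmented copy of)
the recursively built decoding graph `Dec_kD`:

* `G` is layered, with levels `0, …, k` (level `i` here is the level `l_{i+1}` of the
  paper), level `i` having `t^(k-i) * m^i` vertices (level `0` carries the `t^k`
  outputs and level `k` the `m^k` inputs);
* the vertices of level `i` are partitioned into the sets `V_u = node i a`,
  `a < t^(k-i)`, of size `m^i`, corresponding to the nodes of the recursion tree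
  `T_k`; the parent of node `(i, a)` is `(i+1, a/t)`, i.e. node `(i+1, b)` has
  children `(i, t*b+j)` for `j < t`, and the root `(k, 0)` corresponds to the top
  level;
* the non-loop edges of `G` decompose into edge-disjoint copies of the base graph
  `D`: each copy `c` sits between consecutive levels `copyLevel c` and
  `copyLevel c + 1`, its `m` input vertices lying in the tree-node set
  `node (copyLevel c + 1) (copyNode c)` and its `j`-th output vertex lying in the
  `j`-th child set `node (copyLevel c) (t * copyNode c + j)` (this realizes the
  recursive identification of the `j`-th output of each copy of `Dec_1` with the
  corresponding input of the `j`-th sub-copy of `Dec_{k-1}`);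
* every vertex is the input-side vertex of at most one copy and the output-side
  vertex of at most one copy, and each vertex not on the bottom (resp. top) level
  is an input (resp. output) vertex of some copy;
* any remaining edges are loops (added to make `G` regular).  -/
structure DecStructure {m t : ℕ} (D : BaseGraph m t) (k : ℕ) (G : Multigraph) where
  level : G.V → ℕ
  level_le : ∀ v, level v ≤ k
  card_level : ∀ i, i ≤ k →
    (Finset.univ.filter fun v => level v = i).card = t ^ (k - i) * m ^ i
  node : ℕ → ℕ → Finset G.V
  node_level : ∀ i a, ∀ v ∈ node i a, level v = i
  node_card : ∀ i, i ≤ k → ∀ a, a < t ^ (k - i) → (node i a).card = m ^ i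
  node_disjoint : ∀ i a b, a ≠ b → Disjoint (node i a) (node i b)
  node_cover : ∀ v, ∃ a, a < t ^ (k - level v) ∧ v ∈ node (level v) a
  ι : Type
  [fintypeι : Fintype ι]
  copyLevel : ι → ℕ
  copyLevel_lt : ∀ c, copyLevel c < k
  copyNode : ι → ℕ
  copyNode_lt : ∀ c, copyNode c < t ^ (k - 1 - copyLevel c)
  vmap : ι → Fin m ⊕ Fin t → G.V
  vmap_inj : ∀ c, Function.Injective (vmap c)
  emap : ι → D.E → G.E
  emap_inj : Function.Injective fun p : ι × D.E => emap p.1 p.2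
  ends_emap : ∀ c e,
    G.ends (emap c e) = s(vmap c (Sum.inl (D.src e)), vmap c (Sum.inr (D.dst e)))
  vmap_inl_mem : ∀ c q, vmap c (Sum.inl q) ∈ node (copyLevel c + 1) (copyNode c)
  vmap_inr_mem : ∀ c (j : Fin t), vmap c (Sum.inr j) ∈ node (copyLevel c) (t * copyNode c + (j : ℕ))
  inl_unique : ∀ c c' q q', vmap c (Sum.inl q) = vmap c' (Sum.inl q') → c = c'
  inr_unique : ∀ c c' j j', vmap c (Sum.inr j) = vmap c' (Sum.inr j') → c = c'
  exists_inl : ∀ v, 0 < level v → ∃ c q, vmap c (Sum.inl q) = v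
  exists_inr : ∀ v, level v < k → ∃ c j, vmap c (Sum.inr j) = v
  edge_cases : ∀ f : G.E, (G.ends f).IsDiag ∨ ∃ c e, emap c e = f

attribute [instance] DecStructure.fintypeι

namespace DecStructure

variable {m t : ℕ} {D : BaseGraph m t} {k : ℕ} {G : Multigraph}

/-- The level `l_{i+1}` (0-indexed as `i`) of the decoding graph. -/
noncomputable def lvl (ds : DecStructure D k G) (i : ℕ) : Finset G.V :=
  Finset.univ.filter fun v => ds.level v = i

/-- The fraction of vertices of a set `W` lying in `S`. -/
noncomputable def frac (_ : DecStructure D k G) (S W : Finset G.V) : ℝ :=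
  ((S ∩ W).card : ℝ) / (W.card : ℝ)

/-- `σ_i`: the fractional size of `S` at level `i` (0-indexed). -/
noncomputable def sigma (ds : DecStructure D k G) (S : Finset G.V) (i : ℕ) : ℝ :=
  ds.frac S (ds.lvl i)

/-- The copies of the base graph containing both a vertex of `S` and a vertex
outside `S`. -/
noncomputable def mixedCopies (ds : DecStructure D k G) (S : Finset G.V) :
    Finset ds.ι :=
  Finset.univ.filter fun c => (∃ x, ds.vmap c x ∈ S) ∧ ∃ x, ds.vmap c x ∉ S

end DecStructure

/-! ### Cuts of the base graph and a summation identity -/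

/-- A vertex set that separates a connected base graph cuts one of its edges. -/
lemma BaseGraph.Connected.exists_cut {m t : ℕ} {D : BaseGraph m t} (h : D.Connected)
    (P : Set (Fin m ⊕ Fin t)) {x y : Fin m ⊕ Fin t} (hx : x ∈ P) (hy : y ∉ P) :
    ∃ e, (Sum.inl (D.src e) ∈ P ∧ Sum.inr (D.dst e) ∉ P) ∨
      (Sum.inl (D.src e) ∉ P ∧ Sum.inr (D.dst e) ∈ P) := by
  obtain ⟨p⟩ := h.preconnected x y
  obtain ⟨a, -, ha, hb⟩ := p.exists_boundary_dart P hx hy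
  have hadj := a.adj
  rw [SimpleGraph.fromRel_adj] at hadj
  rcases hadj.2 with ⟨e, h1, h2⟩ | ⟨e, h1, h2⟩
  · exact ⟨e, Or.inl ⟨h1 ▸ ha, h2 ▸ hb⟩⟩
  · exact ⟨e, Or.inr ⟨h1 ▸ hb, h2 ▸ ha⟩⟩

lemma sum_range_mul_split (t : ℕ) (g : ℕ → ℝ) (n : ℕ) :
    ∑ a ∈ Finset.range (n * t), g a =
      ∑ b ∈ Finset.range n, ∑ j ∈ Finset.range t, g (t * b + j) := by
  induction n with
  | zero => simp
  | succ n ih =>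
    rw [Finset.sum_range_succ, ← ih, Nat.succ_mul, Finset.sum_range_add, Nat.mul_comm n t]

namespace DecStructure

variable {m t : ℕ} {D : BaseGraph m t} {k : ℕ} {G : Multigraph}

/-! ### Enumerating vertices through tree nodes and copies -/

/-- Summation over all vertices, organised along the nodes of the recursion tree. -/
lemma sum_nodes (ds : DecStructure D k G) (f : G.V → ℝ) :
    ∑ v, f v = ∑ i ∈ Finset.range (k + 1), ∑ a ∈ Finset.range (t ^ (k - i)),
      ∑ v ∈ ds.node i a, f v := by
  have h1 : ∑ v, f v = ∑ i ∈ Finset.range (k + 1), ∑ v with ds.level v = i, f v := by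
    rw [Finset.sum_fiberwise_of_maps_to]
    intro v _
    have := ds.level_le v
    simp; omega
  rw [h1]
  refine Finset.sum_congr rfl fun i _ => ?_
  rw [← Finset.sum_biUnion fun a _ b _ hab => ds.node_disjoint i a b hab]
  refine Finset.sum_congr ?_ fun _ _ => rfl
  ext v
  simp only [Finset.mem_filter, Finset.mem_univ, true_and, Finset.mem_biUnion, Finset.mem_range]
  constructor
  · rintro rfl
    exact ds.node_cover v
  · rintro ⟨a, -, hv⟩
    exact ds.node_level i a v hv

/-- The copies of the base graph whose inputs lie in the node set `(i + 1, b)`. -/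
noncomputable def copies (ds : DecStructure D k G) (i b : ℕ) : Finset ds.ι :=
  Finset.univ.filter fun c => ds.copyLevel c = i ∧ ds.copyNode c = b

lemma node_eq_of_mem (ds : DecStructure D k G) {i a b : ℕ} {v : G.V}
    (ha : v ∈ ds.node i a) (hb : v ∈ ds.node i b) : a = b := by
  by_contra hab
  exact Finset.disjoint_left.mp (ds.node_disjoint i a b hab) ha hb

/-- The `j`-th outputs of the copies below `(i + 1, b)` enumerate the `j`-th child set. -/
lemma sum_child (ds : DecStructure D k G) (f : G.V → ℝ) {i b : ℕ} (hi : i < k) (j : Fin t) :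
    ∑ c ∈ ds.copies i b, f (ds.vmap c (Sum.inr j)) = ∑ v ∈ ds.node i (t * b + j), f v := by
  refine Finset.sum_bij (fun c _ => ds.vmap c (Sum.inr j)) ?_ ?_ ?_ ?_
  · intro c hc
    simp only [copies, Finset.mem_filter, Finset.mem_univ, true_and] at hc
    obtain ⟨rfl, rfl⟩ := hc
    exact ds.vmap_inr_mem c j
  · intro c _ c' _ h
    exact ds.inr_unique _ _ _ _ h
  · intro v hv
    have hl := ds.node_level _ _ _ hv
    obtain ⟨c, j', rfl⟩ := ds.exists_inr v (hl ▸ hi)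
    have hm := ds.vmap_inr_mem c j'
    have hl' := ds.node_level _ _ _ hm
    have hci : ds.copyLevel c = i := hl'.symm.trans hl
    rw [hci] at hm
    have hab := ds.node_eq_of_mem hm hv
    have hb : ds.copyNode c = b := by
      have := congrArg (· / t) hab
      simpa [Nat.mul_add_div j.pos, Nat.div_eq_of_lt] using this
    have hj : j' = j := by
      rw [hb] at hab
      exact Fin.ext (by omega)
    subst hj
    exact ⟨c, by simp [copies, hci, hb], rfl⟩
  · intro _ _; rfl

/-- The inputs of the copies below `(i + 1, b)` enumerate the node set `(i + 1, b)`. -/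
lemma sum_parent (ds : DecStructure D k G) (f : G.V → ℝ) (i b : ℕ) :
    ∑ c ∈ ds.copies i b, ∑ q : Fin m, f (ds.vmap c (Sum.inl q)) =
      ∑ v ∈ ds.node (i + 1) b, f v := by
  rw [← Finset.sum_product']
  refine Finset.sum_bij (fun p _ => ds.vmap p.1 (Sum.inl p.2)) ?_ ?_ ?_ ?_
  · rintro ⟨c, q⟩ hc
    simp only [copies, Finset.mem_product, Finset.mem_filter, Finset.mem_univ, true_and,
      and_true] at hc
    obtain ⟨rfl, rfl⟩ := hc
    exact ds.vmap_inl_mem c q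
  · rintro ⟨c, q⟩ _ ⟨c', q'⟩ _ h
    obtain rfl := ds.inl_unique _ _ _ _ h
    simpa using ds.vmap_inj c h
  · intro v hv
    have hl := ds.node_level _ _ _ hv
    obtain ⟨c, q, rfl⟩ := ds.exists_inl v (by omega)
    have hm := ds.vmap_inl_mem c q
    have hl' := ds.node_level _ _ _ hm
    have hci : ds.copyLevel c = i := by omega
    rw [hci] at hm
    have hb := ds.node_eq_of_mem hm hv
    exact ⟨(c, q), by simp [copies, hci, hb], rfl⟩
  · intro _ _; rfl

/-! ### Mixed copies and boundary edges -/

/-- By connectivity of the base graph, each mixed copy contains a boundary edge, and distinct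
copies are edge-disjoint. -/
lemma mixed_le (ds : DecStructure D k G) (hconn : D.Connected) (S : Finset G.V) :
    (ds.mixedCopies S).card ≤ (G.edgeBoundary S).card := by
  have h : ∀ c ∈ ds.mixedCopies S, ∃ e, ds.emap c e ∈ G.edgeBoundary S := by
    intro c hc
    simp only [mixedCopies, Finset.mem_filter, Finset.mem_univ, true_and] at hc
    obtain ⟨⟨x, hx⟩, ⟨y, hy⟩⟩ := hc
    obtain ⟨e, he⟩ := hconn.exists_cut {x | ds.vmap c x ∈ S} hx hy
    refine ⟨e, ?_⟩
    simp only [Multigraph.edgeBoundary, Multigraph.between, Finset.mem_filter, Finset.mem_univ,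
      true_and, Finset.mem_compl, ds.ends_emap]
    rcases he with ⟨h1, h2⟩ | ⟨h1, h2⟩
    · exact ⟨_, h1, _, h2, rfl⟩
    · exact ⟨_, h2, _, h1, Sym2.eq_swap⟩
  rcases (ds.mixedCopies S).eq_empty_or_nonempty with h0 | ⟨c₀, hc₀⟩
  · simp [h0]
  have : Nonempty D.E := ⟨(h c₀ hc₀).choose⟩
  choose! e he using h
  refine Finset.card_le_card_of_injOn (fun c => ds.emap c (e c)) he ?_
  intro c _ c' _ hcc
  have := @ds.emap_inj (c, e c) (c', e c') hcc
  exact congrArg Prod.fst this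

/-! ### Densities along the recursion tree -/

/-- The density `ρ(i,a)` of `S` in the tree-node set `node i a`, as a normalised count. -/
noncomputable def rho (ds : DecStructure D k G) (S : Finset G.V) (i a : ℕ) : ℝ :=
  (∑ v ∈ ds.node i a, if v ∈ S then (1 : ℝ) else 0) / (m : ℝ) ^ i

/-- The number of mixed copies below the node `(i + 1, b)`. -/
noncomputable def mix (ds : DecStructure D k G) (S : Finset G.V) (i b : ℕ) : ℝ :=
  ∑ c ∈ ds.copies i b, if c ∈ ds.mixedCopies S then (1 : ℝ) else 0

/-- The density changes along a tree edge only through mixed copies. -/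
lemma node_step (ds : DecStructure D k G) (hm : 0 < m) (S : Finset G.V) {i b : ℕ} (hi : i < k)
    (j : Fin t) :
    (m : ℝ) ^ i * |ds.rho S i (t * b + j) - ds.rho S (i + 1) b| ≤ ds.mix S i b := by
  have hm' : (0 : ℝ) < m := by exact_mod_cast hm
  set f : G.V → ℝ := fun v => if v ∈ S then (1 : ℝ) else 0 with hf
  have key : (m : ℝ) ^ (i + 1) * (ds.rho S i (t * b + j) - ds.rho S (i + 1) b) =
      ∑ c ∈ ds.copies i b,
        ∑ q : Fin m, (f (ds.vmap c (Sum.inr j)) - f (ds.vmap c (Sum.inl q))) := by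
    simp only [Finset.sum_sub_distrib, Finset.sum_const, Finset.card_univ, Fintype.card_fin,
      nsmul_eq_mul]
    rw [ds.sum_parent f, ← Finset.mul_sum, ds.sum_child f hi j]
    unfold rho
    field_simp
    simp only [hf]
    ring
  -- On a copy that is not mixed the indicator of `S` is constant; on a mixed one it varies by
  -- at most `1` on each of the `m` inputs.
  have bound : ∀ c ∈ ds.copies i b,
      |∑ q : Fin m, (f (ds.vmap c (Sum.inr j)) - f (ds.vmap c (Sum.inl q)))| ≤
        m * (if c ∈ ds.mixedCopies S then (1 : ℝ) else 0) := by
    intro c _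
    refine (Finset.abs_sum_le_sum_abs _ _).trans ?_
    have : ∀ q ∈ (Finset.univ : Finset (Fin m)),
        |f (ds.vmap c (Sum.inr j)) - f (ds.vmap c (Sum.inl q))| ≤
          (if c ∈ ds.mixedCopies S then (1 : ℝ) else 0) := by
      intro q _
      by_cases h1 : ds.vmap c (Sum.inr j) ∈ S <;> by_cases h2 : ds.vmap c (Sum.inl q) ∈ S
      · simp only [hf, h1, h2, if_true, sub_self, abs_zero]; split_ifs <;> norm_num
      · have : c ∈ ds.mixedCopies S := by
          simp only [mixedCopies, Finset.mem_filter, Finset.mem_univ, true_and]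
          exact ⟨⟨_, h1⟩, ⟨_, h2⟩⟩
        simp [hf, h1, h2, this]
      · have : c ∈ ds.mixedCopies S := by
          simp only [mixedCopies, Finset.mem_filter, Finset.mem_univ, true_and]
          exact ⟨⟨_, h2⟩, ⟨_, h1⟩⟩
        simp [hf, h1, h2, this]
      · simp only [hf, h1, h2, if_false, sub_self, abs_zero]; split_ifs <;> norm_num
    refine (Finset.sum_le_sum this).trans ?_
    simp
  have h2 : (m : ℝ) ^ (i + 1) * |ds.rho S i (t * b + j) - ds.rho S (i + 1) b| ≤
      m * ds.mix S i b := by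
    rw [← abs_of_pos (pow_pos hm' (i + 1)), ← abs_mul, key, mix, Finset.mul_sum]
    exact (Finset.abs_sum_le_sum_abs _ _).trans (Finset.sum_le_sum bound)
  rw [pow_succ', mul_assoc] at h2
  exact le_of_mul_le_mul_left h2 hm'

/-- The number of mixed copies between levels `i` and `i + 1`. -/
noncomputable def mixLevel (ds : DecStructure D k G) (S : Finset G.V) (i : ℕ) : ℝ :=
  ∑ b ∈ Finset.range (t ^ (k - 1 - i)), ds.mix S i b

lemma mixLevel_nonneg (ds : DecStructure D k G) (S : Finset G.V) (i : ℕ) :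
    0 ≤ ds.mixLevel S i :=
  Finset.sum_nonneg fun _ _ => Finset.sum_nonneg fun _ _ => by split_ifs <;> norm_num

lemma sum_mixLevel (ds : DecStructure D k G) (S : Finset G.V) :
    ∑ i ∈ Finset.range k, ds.mixLevel S i = (ds.mixedCopies S).card := by
  have h0 : ((ds.mixedCopies S).card : ℝ) =
      ∑ c : ds.ι, if c ∈ ds.mixedCopies S then (1 : ℝ) else 0 := by simp
  rw [h0, ← Finset.sum_fiberwise_of_maps_to (s := Finset.univ) (t := Finset.range k)
    (g := ds.copyLevel) (fun c _ => Finset.mem_range.mpr (ds.copyLevel_lt c))]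
  refine Finset.sum_congr rfl fun i _ => ?_
  rw [← Finset.sum_fiberwise_of_maps_to (t := Finset.range (t ^ (k - 1 - i)))
    (g := ds.copyNode)]
  · refine Finset.sum_congr rfl fun b _ => ?_
    rw [mix, copies, Finset.filter_filter]
  · intro c hc
    simp only [Finset.mem_filter, Finset.mem_univ, true_and] at hc
    subst hc
    exact Finset.mem_range.mpr (ds.copyNode_lt c)

/-- Total deviation of the densities on level `i` from the density `r` at the root, weighted by
the number `t ^ i` of leaves below a level-`i` node. -/
noncomputable def dev (ds : DecStructure D k G) (S : Finset G.V) (i : ℕ) : ℝ :=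
  (t : ℝ) ^ i * ∑ a ∈ Finset.range (t ^ (k - i)), |ds.rho S i a - ds.rho S k 0|

lemma dev_step (ds : DecStructure D k G) (ht : 0 < t) (htm : t < m) (S : Finset G.V) {i : ℕ}
    (hi : i < k) : ds.dev S i ≤ t * ds.mixLevel S i + ds.dev S (i + 1) := by
  have hexp : t ^ (k - i) = t ^ (k - 1 - i) * t := by
    rw [← pow_succ]; congr 1; omega
  have hexp' : k - (i + 1) = k - 1 - i := by omega
  have hti : (0 : ℝ) ≤ (t : ℝ) ^ i := by positivity
  have htmi : (t : ℝ) ^ i ≤ (m : ℝ) ^ i := by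
    gcongr
  rw [dev, dev, hexp, hexp', sum_range_mul_split, mixLevel, Finset.mul_sum, Finset.mul_sum,
    Finset.mul_sum, ← Finset.sum_add_distrib]
  refine Finset.sum_le_sum fun b _ => ?_
  have : ∀ j ∈ Finset.range t, (t : ℝ) ^ i * |ds.rho S i (t * b + j) - ds.rho S k 0| ≤
      ds.mix S i b + (t : ℝ) ^ i * |ds.rho S (i + 1) b - ds.rho S k 0| := by
    intro j hj
    have h1 := ds.node_step (ht.trans htm) S (b := b) hi ⟨j, Finset.mem_range.mp hj⟩
    have h2 := abs_sub_le (ds.rho S i (t * b + j)) (ds.rho S (i + 1) b) (ds.rho S k 0)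
    have h3 := mul_le_mul_of_nonneg_right htmi
      (abs_nonneg (ds.rho S i (t * b + j) - ds.rho S (i + 1) b))
    have h4 := mul_le_mul_of_nonneg_left h2 hti
    simp only at h1
    linarith
  rw [Finset.mul_sum]
  refine (Finset.sum_le_sum this).trans (le_of_eq ?_)
  rw [Finset.sum_const, Finset.card_range, nsmul_eq_mul]
  ring

/-- Telescoping of `dev_step` up to the root, where the deviation vanishes. -/
lemma dev_le (ds : DecStructure D k G) (ht : 0 < t) (htm : t < m) (S : Finset G.V) {i : ℕ}
    (hi : i ≤ k) : ds.dev S i ≤ t * (ds.mixedCopies S).card := by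
  have h : ds.dev S i ≤ t * ∑ l ∈ Finset.Ico i k, ds.mixLevel S l := by
    induction hi using Nat.decreasingInduction with
    | of_succ i hi ih =>
      have := ds.dev_step ht htm S hi
      rw [Finset.sum_eq_sum_Ico_succ_bot hi, mul_add]
      linarith
    | self => simp [dev]
  refine h.trans ?_
  rw [← ds.sum_mixLevel S]
  refine mul_le_mul_of_nonneg_left ?_ (by positivity)
  exact Finset.sum_le_sum_of_subset_of_nonneg
    (fun l hl => by simp at hl ⊢; omega) fun l _ _ => ds.mixLevel_nonneg S l

/-! ### Comparison of leaves, root and all levels -/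

/-- Bottom-level node sets are singletons, so their densities are `0` or `1`, at distance at
least `min r (1 - r)` from `r`. -/
lemma leaf_bound (ds : DecStructure D k G) (S : Finset G.V) :
    (t : ℝ) ^ k * min (ds.rho S k 0) (1 - ds.rho S k 0) ≤ ds.dev S 0 := by
  have : ∀ a ∈ Finset.range (t ^ (k - 0)), min (ds.rho S k 0) (1 - ds.rho S k 0) ≤
      |ds.rho S 0 a - ds.rho S k 0| := by
    intro a ha
    have hc := ds.node_card 0 (Nat.zero_le k) a (Finset.mem_range.mp ha)
    rw [pow_zero, Finset.card_eq_one] at hc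
    obtain ⟨v, hv⟩ := hc
    have hr : ds.rho S 0 a = if v ∈ S then (1 : ℝ) else 0 := by
      rw [rho, hv, Finset.sum_singleton, pow_zero, div_one]
    rw [hr]
    split_ifs
    · exact (min_le_right _ _).trans (le_abs_self _)
    · exact (min_le_left _ _).trans ((le_abs_self _).trans (by simp))
  have h := Finset.sum_le_sum this
  rw [Finset.sum_const, Finset.card_range, nsmul_eq_mul] at h
  simpa [dev] using h

/-- A set of at most half the vertices is controlled by its mixed copies; the sum is
`|V| / t ^ k`. -/
lemma card_le (ds : DecStructure D k G) (ht : 0 < t) (htm : t < m) (S : Finset G.V)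
    (hS : 2 * S.card ≤ Fintype.card G.V) :
    (S.card : ℝ) ≤ 2 * (∑ i ∈ Finset.range (k + 1), ((m : ℝ) / t) ^ i) *
      (t * (ds.mixedCopies S).card) := by
  have ht' : (0 : ℝ) < t := by exact_mod_cast ht
  have hm' : (0 : ℝ) < m := by exact_mod_cast ht.trans htm
  set Q := ∑ i ∈ Finset.range (k + 1), ((m : ℝ) / t) ^ i with hQ
  set X : ℝ := t * (ds.mixedCopies S).card with hX
  set r := ds.rho S k 0 with hr
  have hQpos : 0 < Q := Finset.sum_pos (fun i _ => by positivity) ⟨0, by simp⟩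
  have hcardS : (S.card : ℝ) = ∑ i ∈ Finset.range (k + 1),
      ∑ a ∈ Finset.range (t ^ (k - i)), (m : ℝ) ^ i * ds.rho S i a := by
    have := ds.sum_nodes fun v => if v ∈ S then (1 : ℝ) else 0
    rw [Finset.sum_boole] at this
    simp only [Finset.filter_univ_mem] at this
    rw [this]
    refine Finset.sum_congr rfl fun i _ => Finset.sum_congr rfl fun a _ => ?_
    rw [rho]
    field_simp
  have hcardV : (Fintype.card G.V : ℝ) = ∑ i ∈ Finset.range (k + 1),
      ∑ a ∈ Finset.range (t ^ (k - i)), (m : ℝ) ^ i := by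
    have := ds.sum_nodes fun _ => (1 : ℝ)
    simp only [Finset.sum_const, nsmul_eq_mul, mul_one, Finset.card_univ] at this
    rw [this]
    refine Finset.sum_congr rfl fun i hi => ?_
    rw [Finset.sum_congr rfl fun a ha => by
      rw [ds.node_card i (by simp at hi; omega) a (Finset.mem_range.mp ha)]]
    simp
  have hV : (Fintype.card G.V : ℝ) = (t : ℝ) ^ k * Q := by
    rw [hcardV, hQ, Finset.mul_sum]
    refine Finset.sum_congr rfl fun i hi => ?_
    obtain ⟨l, rfl⟩ := Nat.exists_eq_add_of_le (show i ≤ k by simp at hi; omega)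
    rw [Finset.sum_const, Finset.card_range, nsmul_eq_mul, Nat.add_sub_cancel_left, div_pow,
      pow_add]
    push_cast
    field_simp
  have hdiff : |(S.card : ℝ) - r * Fintype.card G.V| ≤ Q * X := by
    rw [hcardS, hcardV, Finset.mul_sum, ← Finset.sum_sub_distrib, hQ, Finset.sum_mul]
    refine (Finset.abs_sum_le_sum_abs _ _).trans (Finset.sum_le_sum fun i hi => ?_)
    have hd := ds.dev_le ht htm S (show i ≤ k by simp at hi; omega)
    rw [Finset.mul_sum, ← Finset.sum_sub_distrib]
    refine (Finset.abs_sum_le_sum_abs _ _).trans ?_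
    refine le_trans (le_of_eq ?_) (mul_le_mul_of_nonneg_left hd (by positivity))
    rw [dev, ← mul_assoc, ← mul_pow, div_mul_cancel₀ _ ht'.ne', Finset.mul_sum]
    refine Finset.sum_congr rfl fun a _ => ?_
    rw [mul_comm r, ← mul_sub, abs_mul, abs_of_pos (by positivity)]
  have hleaf : (t : ℝ) ^ k * min r (1 - r) ≤ X :=
    (ds.leaf_bound S).trans (ds.dev_le ht htm S (Nat.zero_le k))
  have hS' : 2 * (S.card : ℝ) ≤ (t : ℝ) ^ k * Q := by rw [← hV]; exact_mod_cast hS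
  rw [hV, abs_le] at hdiff
  have hQX := mul_le_mul_of_nonneg_left hleaf hQpos.le
  rcases min_choice r (1 - r) with h | h <;> rw [h] at hQX
  -- Small `r`: `|S| ≤ r|V| + QX ≤ 2QX`.
  · linarith
  -- `r` close to `1`: `(1 - r)|V| ≤ QX` forces `|S| ≥ |V| - 2QX`, hence `|V| ≤ 4QX`.
  · linarith

end DecStructure

/-- A geometric sum with ratio `x > 1` is at most a constant times its largest term. -/
lemma geom_sum_le_last {x : ℝ} (hx : 1 < x) (k : ℕ) :
    ∑ i ∈ Finset.range (k + 1), x ^ i ≤ x / (x - 1) * x ^ k := by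
  have h : 0 < x - 1 := by linarith
  rw [geom_sum_eq hx.ne', div_mul_eq_mul_div, pow_succ']
  gcongr
  linarith

/-- **Main Lemma for Strassen-like decoding graphs.** Let `D` be a
fixed connected base graph with `m` inputs and `t` outputs (disjoint), `2 ≤ t < m`,
of constant maximum degree `Δ`.  Then there is a constant `c > 0` depending only on
`D` such that for every `k ≥ 1`, `h(Dec_kD) ≥ c·(t/m)^k`; that is, every
`S ⊆ V(Dec_kD)` with `|S| ≤ |V|/2` satisfies `|E(S, V∖S)| ≥ c·d·|S|·(t/m)^k`. -/
theorem stmt12 (m t : ℕ) (ht : 2 ≤ t) (htm : t < m) (D : BaseGraph m t)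
    (hconn : D.Connected)
    (Δ : ℕ) (hΔin : ∀ j : Fin t, D.inDeg j ≤ Δ) (hΔout : ∀ q : Fin m, D.outDeg q ≤ Δ)
    (d : ℕ) :
    ∃ c : ℝ, 0 < c ∧
      ∀ k, 1 ≤ k → ∀ G : Multigraph, ∀ ds : DecStructure D k G, G.IsRegular d →
        ∀ S : Finset G.V, 2 * S.card ≤ Fintype.card G.V →
          c * (d : ℝ) * (S.card : ℝ) * ((t : ℝ) / (m : ℝ)) ^ k ≤
            ((G.edgeBoundary S).card : ℝ) := by
  have ht0 : 0 < t := by omega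
  have ht' : (0 : ℝ) < t := by exact_mod_cast ht0
  have htm' : (t : ℝ) < m := by exact_mod_cast htm
  have hx : 1 < (m : ℝ) / t := by rwa [one_lt_div ht']
  set C : ℝ := (m : ℝ) / t / ((m : ℝ) / t - 1) with hC
  have hCpos : 0 < C := div_pos (by linarith) (by linarith)
  refine ⟨1 / (2 * C * t * (d + 1)), by positivity, ?_⟩
  intro k _ G ds _ S hS
  have h1 := ds.card_le ht0 htm S hS
  have h2 := geom_sum_le_last hx k
  have h3 : ((ds.mixedCopies S).card : ℝ) ≤ (G.edgeBoundary S).card := by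
    exact_mod_cast ds.mixed_le hconn S
  set B : ℝ := ((G.edgeBoundary S).card : ℝ)
  have hB : 0 ≤ B := Nat.cast_nonneg _
  have h4 : (S.card : ℝ) ≤ 2 * (C * ((m : ℝ) / t) ^ k) * (t * B) :=
    h1.trans (by gcongr)
  have hm' : (0 : ℝ) < m := by linarith
  have h5 : (S.card : ℝ) * ((t : ℝ) / m) ^ k ≤ 2 * C * t * B := by
    refine (mul_le_mul_of_nonneg_right h4 (by positivity)).trans (le_of_eq ?_)
    have : ((m : ℝ) / t) ^ k * ((t : ℝ) / m) ^ k = 1 := by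
      rw [← mul_pow, div_mul_div_cancel₀ ht'.ne', div_self hm'.ne', one_pow]
    linear_combination (2 * C * t * B) * this
  calc 1 / (2 * C * t * (d + 1)) * (d : ℝ) * (S.card : ℝ) * ((t : ℝ) / m) ^ k
      = 1 / (2 * C * t * (d + 1)) * d * ((S.card : ℝ) * ((t : ℝ) / m) ^ k) := by ring
    _ ≤ 1 / (2 * C * t * (d + 1)) * d * (2 * C * t * B) := by gcongr
    _ = d / (d + 1) * B := by field_simp
    _ ≤ 1 * B := by
      gcongr
      rw [div_le_one (by positivity)]
      linarith
    _ = B := one_mul B
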